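/- For each natural number m ≥ 1, define d_j := C(2m, m+j) − C(2m, m+j+1) for 0 ≤ j ≤ m, and define E_m := ( Σ_{j=0}^{m} d_j² · log(2j+1) ) / catalan(2m), where catalan(k) = C(2k,k)/(k+1) and log is the natural logarithm. Then E_m / log m converges to 1/2 as m → ∞. -/

import Mathlib

open Filter

/-!
Write `x = 2j + 1` and `N = 2m + 1`. Then `d_j = (x / N) * C(N, m + 1 + j)`, and the weights
`p_j = d_j ^ 2 / catalan (2m)` form a probability distribution for which `E m` is the mean of
`log x`. By the symmetry `k ↦ N - k`, the means of `x⁻²`, `1` and `x²` are, up to normalization, the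
moments of order `0`, `2` and `4` of `2k - N` under the weights `C(N, k) ^ 2`. Since
`(2k - N) ^ 2 = N ^ 2 - 4k(N - k)` and the factors `k` and `N - k` are absorbed by the binomial
coefficients, Vandermonde's identity evaluates these moments in closed form. Jensen's inequality
bounds the mean of `log x` above by `log ⟨x²⟩ / 2` and below by `-log ⟨x⁻²⟩ / 2`, and both bounds
are `log m / 2 + O(1)`.
-/

section SymmetricSums

lemma sum_range_two_mul_eq_two_nsmul {M : Type*} [AddCommMonoid M] {g : ℕ → M} {n : ℕ}
    (hg : ∀ k < n, g (n - 1 - k) = g (n + k)) :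
    ∑ k ∈ Finset.range (2 * n), g k = 2 • ∑ k ∈ Finset.range n, g (n + k) := by
  rw [two_mul, Finset.sum_range_add, ← Finset.sum_range_reflect, two_nsmul]
  congr 1
  exact Finset.sum_congr rfl fun k hk => hg k (Finset.mem_range.mp hk)

variable {R : Type*} [CommRing R]

lemma sum_even_mul_choose_sq {f : R → R} (hf : f.Even) (m : ℕ) :
    ∑ k ∈ Finset.range (2 * m + 2), f (2 * k - (2 * m + 1)) * ((2 * m + 1).choose k : R) ^ 2
      = 2 * ∑ j ∈ Finset.range (m + 1),
          f (2 * j + 1) * ((2 * m + 1).choose (m + 1 + j) : R) ^ 2 := by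
  rw [show 2 * m + 2 = 2 * (m + 1) by ring, sum_range_two_mul_eq_two_nsmul, nsmul_eq_mul]
  · push_cast
    refine congrArg (2 * ·) (Finset.sum_congr rfl fun j _ => ?_)
    ring_nf
  · intro j hj
    have hcast : ((m + 1 - 1 - j : ℕ) : R) = m - j := by
      rw [Nat.add_sub_cancel, Nat.cast_sub (by omega)]
    rw [← Nat.choose_symm (show m + 1 - 1 - j ≤ 2 * m + 1 by omega),
      show 2 * m + 1 - (m + 1 - 1 - j) = m + 1 + j by omega, ← hf, hcast]
    push_cast
    ring_nf

end SymmetricSums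

section ChooseSqMoments

lemma sum_choose_mul_choose_succ (n : ℕ) :
    ∑ k ∈ Finset.range (n + 1), n.choose k * n.choose (k + 1) = (2 * n).choose (n + 1) := by
  rw [two_mul, Nat.add_choose_eq, Finset.Nat.sum_antidiagonal_eq_sum_range_succ_mk,
    Finset.sum_range_succ' _ (n + 1)]
  simp only [tsub_zero, Nat.choose_succ_self, mul_zero, add_zero]
  refine Finset.sum_congr rfl fun k hk => ?_
  rw [mul_comm, Nat.add_sub_add_right, Nat.choose_symm (Finset.mem_range_succ_iff.mp hk)]

lemma choose_two_mul_succ_eq_mul_catalan (n : ℕ) : (2 * n).choose (n + 1) = n * catalan n := by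
  refine Nat.eq_of_mul_eq_mul_right n.add_one_pos ?_
  rw [Nat.choose_succ_right_eq, ← Nat.centralBinom_eq_two_mul_choose,
    ← succ_mul_catalan_eq_centralBinom, show 2 * n - n = n by omega]
  ring

lemma centralBinom_succ_eq_mul_catalan (n : ℕ) :
    (n + 1).centralBinom = 2 * (2 * n + 1) * catalan n := by
  refine Nat.eq_of_mul_eq_mul_left n.add_one_pos ?_
  rw [Nat.succ_mul_centralBinom_succ, ← succ_mul_catalan_eq_centralBinom]
  ring

variable (R : Type*) [CommRing R]

lemma cast_add_one_mul_choose_succ (n k : ℕ) :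
    ((k : R) + 1) * (n + 1).choose (k + 1) = (n + 1) * n.choose k := by
  rw [mul_comm]
  exact_mod_cast congrArg (Nat.cast : ℕ → R) (Nat.add_one_mul_choose_eq n k).symm

lemma cast_sub_mul_choose_succ (n k : ℕ) :
    ((n : R) - k) * (n + 1).choose (k + 1) = (n + 1) * n.choose (k + 1) := by
  have hpascal : ((n + 1).choose (k + 1) : R) = n.choose k + n.choose (k + 1) := by
    exact_mod_cast congrArg (Nat.cast : ℕ → R) (Nat.choose_succ_succ n k)
  linear_combination (n + 1 : R) * hpascal - cast_add_one_mul_choose_succ R n k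

lemma sum_choose_succ_sq (n : ℕ) :
    ∑ k ∈ Finset.range (n + 2), ((n + 1).choose k : R) ^ 2 = 2 * (2 * n + 1) * catalan n := by
  have hnat : ∑ k ∈ Finset.range (n + 2), (n + 1).choose k ^ 2 = 2 * (2 * n + 1) * catalan n := by
    rw [Nat.sum_range_choose_sq, ← Nat.centralBinom_eq_two_mul_choose,
      centralBinom_succ_eq_mul_catalan]
  exact_mod_cast congrArg (Nat.cast : ℕ → R) hnat

lemma sum_mul_sub_mul_choose_succ_sq (n : ℕ) :
    ∑ k ∈ Finset.range (n + 2), (k * (n + 1 - k) : R) * ((n + 1).choose k : R) ^ 2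
      = (n + 1) ^ 2 * (n * catalan n) := by
  have hvandermonde : ∑ k ∈ Finset.range (n + 1), (n.choose k : R) * n.choose (k + 1)
      = n * catalan n := by
    exact_mod_cast congrArg (Nat.cast : ℕ → R)
      ((sum_choose_mul_choose_succ n).trans (choose_two_mul_succ_eq_mul_catalan n))
  rw [Finset.sum_range_succ', ← hvandermonde, Finset.mul_sum, Nat.cast_zero, zero_mul, zero_mul,
    add_zero]
  refine Finset.sum_congr rfl fun k _ => ?_
  have hk := cast_add_one_mul_choose_succ R n k
  have hk' := cast_sub_mul_choose_succ R n k
  push_cast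
  linear_combination (n - k : R) * (n + 1).choose (k + 1) * hk + (n + 1 : R) * n.choose k * hk'

lemma cast_mul_sub_mul_choose_add_two (n k : ℕ) :
    ((k : R) + 1) * (n + 1 - k) * (n + 2).choose (k + 1) = (n + 2) * (n + 1) * n.choose k := by
  have hinner := cast_sub_mul_choose_succ R (n + 1) k
  have hlower := cast_add_one_mul_choose_succ R n k
  push_cast at hinner
  linear_combination ((k : R) + 1) * hinner + (n + 2 : R) * hlower

lemma sum_mul_sub_sq_mul_choose_add_two_sq (n : ℕ) :
    ∑ k ∈ Finset.range (n + 3), (k * (n + 2 - k) : R) ^ 2 * ((n + 2).choose k : R) ^ 2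
      = ((n + 2) * (n + 1)) ^ 2 * n.centralBinom := by
  rw [Nat.centralBinom_eq_two_mul_choose, ← Nat.sum_range_choose_sq, Nat.cast_sum, Finset.mul_sum,
    Finset.sum_range_succ, Finset.sum_range_succ']
  push_cast
  rw [sub_self, mul_zero, zero_mul, zero_pow two_ne_zero, zero_mul, zero_mul, add_zero, add_zero]
  refine Finset.sum_congr rfl fun k _ => ?_
  rw [← mul_pow, ← mul_pow, ← cast_mul_sub_mul_choose_add_two]
  ring

lemma sum_mul_sub_sq_mul_choose_succ_sq (n : ℕ) :
    2 * (2 * n - 1) * ∑ k ∈ Finset.range (n + 2),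
        (k * (n + 1 - k) : R) ^ 2 * ((n + 1).choose k : R) ^ 2
      = (n * (n + 1)) ^ 3 * catalan n := by
  cases n with
  | zero => simp [Finset.sum_range_succ]
  | succ n =>
    have hsum := sum_mul_sub_sq_mul_choose_add_two_sq R n
    have hcatalan : 2 * (2 * n + 1) * n.centralBinom = (n + 1) * ((n + 2) * catalan (n + 1)) := by
      rw [← Nat.succ_mul_centralBinom_succ, ← succ_mul_catalan_eq_centralBinom]
    have hcast := congrArg (Nat.cast : ℕ → R) hcatalan
    push_cast at hcast ⊢
    rw [show (n + 1 + 1 : R) = n + 2 by ring, hsum]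
    linear_combination ((n + 2) * (n + 1)) ^ 2 * hcast

lemma sum_sq_mul_choose_succ_sq (n : ℕ) :
    ∑ k ∈ Finset.range (n + 2), (2 * k - (n + 1) : R) ^ 2 * ((n + 1).choose k : R) ^ 2
      = 2 * (n + 1) ^ 2 * catalan n := by
  calc
    _ = (n + 1) ^ 2 * ∑ k ∈ Finset.range (n + 2), ((n + 1).choose k : R) ^ 2
        - 4 * ∑ k ∈ Finset.range (n + 2), (k * (n + 1 - k) : R) * ((n + 1).choose k : R) ^ 2 := by
      rw [Finset.mul_sum, Finset.mul_sum, ← Finset.sum_sub_distrib]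
      exact Finset.sum_congr rfl fun k _ => by ring
    _ = _ := by
      rw [sum_choose_succ_sq, sum_mul_sub_mul_choose_succ_sq]
      ring

lemma sum_pow_four_mul_choose_succ_sq (n : ℕ) :
    (2 * n - 1) * ∑ k ∈ Finset.range (n + 2),
        (2 * k - (n + 1) : R) ^ 4 * ((n + 1).choose k : R) ^ 2
      = 2 * (n + 1) ^ 3 * (3 * n - 1) * catalan n := by
  have hexpand : ∑ k ∈ Finset.range (n + 2),
        (2 * k - (n + 1) : R) ^ 4 * ((n + 1).choose k : R) ^ 2
      = 2 * (n + 1) ^ 2 * ∑ k ∈ Finset.range (n + 2),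
            (2 * k - (n + 1) : R) ^ 2 * ((n + 1).choose k : R) ^ 2
        - (n + 1) ^ 4 * ∑ k ∈ Finset.range (n + 2), ((n + 1).choose k : R) ^ 2
        + 16 * ∑ k ∈ Finset.range (n + 2),
          (k * (n + 1 - k) : R) ^ 2 * ((n + 1).choose k : R) ^ 2 := by
    rw [Finset.mul_sum, Finset.mul_sum, Finset.mul_sum, ← Finset.sum_sub_distrib,
      ← Finset.sum_add_distrib]
    exact Finset.sum_congr rfl fun k _ => by ring
  rw [hexpand, sum_sq_mul_choose_succ_sq, sum_choose_succ_sq]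
  linear_combination 8 * sum_mul_sub_sq_mul_choose_succ_sq R n

end ChooseSqMoments

section SpinDistribution

/-- The multiplicity `d_j` of the spin-`j` representation in the tensor product of `2 * m`
spin-`1/2` representations, for `j ≤ m`. The subtraction does not truncate, since the binomial
coefficients decrease past the middle of the row. -/
def spinMultiplicity (m j : ℕ) : ℕ := (2 * m).choose (m + j) - (2 * m).choose (m + j + 1)

/-- The probability `d_j ^ 2 / catalan (2 * m)` of the total spin `j` of either half of a horizon of
`4 * m` punctures in the maximally mixed intertwiner state. -/
noncomputable def spinProb (m j : ℕ) : ℝ := (spinMultiplicity m j : ℝ) ^ 2 / catalan (2 * m)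

lemma choose_succ_le_choose {n k : ℕ} (h : n ≤ 2 * k + 1) : n.choose (k + 1) ≤ n.choose k := by
  refine le_of_mul_le_mul_right ?_ k.succ_pos
  rw [Nat.choose_succ_right_eq]
  gcongr
  omega

lemma two_mul_add_one_mul_spinMultiplicity (m j : ℕ) :
    (2 * m + 1 : ℝ) * spinMultiplicity m j = (2 * j + 1) * (2 * m + 1).choose (m + 1 + j) := by
  have hlower := cast_add_one_mul_choose_succ ℝ (2 * m) (m + j)
  have hupper := cast_sub_mul_choose_succ ℝ (2 * m) (m + j)
  rw [spinMultiplicity, Nat.cast_sub (choose_succ_le_choose (by omega)), add_right_comm m 1 j]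
  push_cast at hlower hupper
  linear_combination hupper - hlower

lemma catalan_pos (n : ℕ) : 0 < catalan n :=
  Nat.pos_of_mul_pos_left (succ_mul_catalan_eq_centralBinom n ▸ n.centralBinom_pos)

lemma spinProb_nonneg (m j : ℕ) : 0 ≤ spinProb m j := by
  unfold spinProb
  positivity

lemma sum_spinProb_mul_even {f : ℝ → ℝ} (hf : f.Even) (m : ℕ) :
    ∑ j ∈ Finset.range (m + 1), spinProb m j * f (2 * j + 1)
      = (∑ k ∈ Finset.range (2 * m + 2), (2 * k - (2 * m + 1) : ℝ) ^ 2 *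
            f (2 * k - (2 * m + 1)) * ((2 * m + 1).choose k : ℝ) ^ 2)
          / (2 * (2 * m + 1) ^ 2 * catalan (2 * m)) := by
  have heven : (fun x => x ^ 2 * f x).Even := fun x => by simp only [even_two.neg_pow, hf x]
  have hcatalan : (0 : ℝ) < catalan (2 * m) := mod_cast catalan_pos (2 * m)
  rw [sum_even_mul_choose_sq heven, eq_div_iff (by positivity), Finset.sum_mul, Finset.mul_sum]
  refine Finset.sum_congr rfl fun j _ => ?_
  have hsq := congrArg (· ^ 2) (two_mul_add_one_mul_spinMultiplicity m j)
  simp only [mul_pow] at hsq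
  rw [spinProb]
  field_simp
  linear_combination f (2 * j + 1) * hsq

lemma sum_spinProb (m : ℕ) : ∑ j ∈ Finset.range (m + 1), spinProb m j = 1 := by
  have hcatalan : (0 : ℝ) < catalan (2 * m) := mod_cast catalan_pos (2 * m)
  have hmean := sum_spinProb_mul_even (f := fun _ => 1) (fun _ => rfl) m
  have hmoment := sum_sq_mul_choose_succ_sq ℝ (2 * m)
  push_cast at hmoment
  simp only [mul_one] at hmean
  rw [hmean, hmoment, div_self (by positivity)]

lemma sum_spinProb_mul_sq (m : ℕ) :
    ∑ j ∈ Finset.range (m + 1), spinProb m j * (2 * j + 1) ^ 2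
      = ((2 * m + 1) * (6 * m - 1) / (4 * m - 1) : ℝ) := by
  have hcatalan : (0 : ℝ) < catalan (2 * m) := mod_cast catalan_pos (2 * m)
  have hm : (4 * m - 1 : ℝ) ≠ 0 := sub_ne_zero.mpr (by norm_cast; omega)
  have hmoment := sum_pow_four_mul_choose_succ_sq ℝ (2 * m)
  push_cast at hmoment
  rw [sum_spinProb_mul_even (f := (· ^ 2)) (fun x => even_two.neg_pow x)]
  simp only [← pow_add, Nat.reduceAdd]
  rw [div_eq_div_iff (by positivity) hm]
  linear_combination hmoment

lemma sum_spinProb_mul_inv_sq (m : ℕ) :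
    ∑ j ∈ Finset.range (m + 1), spinProb m j * (2 * j + 1 : ℝ)⁻¹ ^ 2
      = (4 * m + 1) / (2 * m + 1) ^ 2 := by
  have hcatalan : (0 : ℝ) < catalan (2 * m) := mod_cast catalan_pos (2 * m)
  have hodd (k : ℕ) : (2 * k - (2 * m + 1) : ℝ) ≠ 0 := sub_ne_zero.mpr (by norm_cast; omega)
  have hmoment := sum_choose_succ_sq ℝ (2 * m)
  push_cast at hmoment
  rw [sum_spinProb_mul_even (f := (·⁻¹ ^ 2)) (fun x => by simp only [inv_neg, even_two.neg_pow])]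
  simp only [← mul_pow, mul_inv_cancel₀ (hodd _), one_pow, one_mul]
  rw [hmoment]
  field_simp
  ring

end SpinDistribution

section LogMean

variable {ι : Type*} {s : Finset ι} {w x : ι → ℝ}

lemma sum_mul_log_le_log_sum_mul_sq (hw : ∀ i ∈ s, 0 ≤ w i) (hw_sum : ∑ i ∈ s, w i = 1)
    (hx : ∀ i ∈ s, 0 < x i) :
    ∑ i ∈ s, w i * Real.log (x i) ≤ Real.log (∑ i ∈ s, w i * x i ^ 2) / 2 := by
  have hjensen := strictConcaveOn_log_Ioi.concaveOn.le_map_sum hw hw_sum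
    (p := fun i => x i ^ 2) fun i hi => pow_pos (hx i hi) 2
  simp only [smul_eq_mul, Real.log_pow, Nat.cast_ofNat, mul_left_comm _ (2 : ℝ),
    ← Finset.mul_sum] at hjensen
  linarith

lemma neg_log_sum_mul_inv_sq_le_sum_mul_log (hw : ∀ i ∈ s, 0 ≤ w i) (hw_sum : ∑ i ∈ s, w i = 1)
    (hx : ∀ i ∈ s, 0 < x i) :
    -Real.log (∑ i ∈ s, w i * (x i)⁻¹ ^ 2) / 2 ≤ ∑ i ∈ s, w i * Real.log (x i) := by
  have h := sum_mul_log_le_log_sum_mul_sq hw hw_sum fun i hi => inv_pos.mpr (hx i hi)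
  simp only [Real.log_inv, mul_neg, Finset.sum_neg_distrib] at h
  linarith

end LogMean

section Asymptotics

variable {m : ℕ}

lemma sum_spinProb_mul_log_le (hm : 1 ≤ m) :
    ∑ j ∈ Finset.range (m + 1), spinProb m j * Real.log (2 * j + 1)
      ≤ (Real.log 5 + Real.log m) / 2 := by
  have hm' : (1 : ℝ) ≤ m := mod_cast hm
  have hbound : (2 * m + 1) * (6 * m - 1) / (4 * m - 1) ≤ (5 * m : ℝ) := by
    rw [div_le_iff₀ (by linarith)]
    nlinarith
  have hpos : 0 < (2 * m + 1) * (6 * m - 1) / (4 * m - 1 : ℝ) :=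
    div_pos (mul_pos (by linarith) (by linarith)) (by linarith)
  calc
    _ ≤ Real.log ((2 * m + 1) * (6 * m - 1) / (4 * m - 1)) / 2 := by
      rw [← sum_spinProb_mul_sq]
      exact sum_mul_log_le_log_sum_mul_sq (fun j _ => spinProb_nonneg m j) (sum_spinProb m)
        fun j _ => by positivity
    _ ≤ Real.log (5 * m) / 2 := by gcongr
    _ = _ := by rw [Real.log_mul (by norm_num) (by positivity)]

lemma log_div_two_le_sum_spinProb_mul_log (hm : 1 ≤ m) :
    Real.log m / 2 ≤ ∑ j ∈ Finset.range (m + 1), spinProb m j * Real.log (2 * j + 1) := by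
  have hm' : (1 : ℝ) ≤ m := mod_cast hm
  have hbound : (4 * m + 1) / (2 * m + 1) ^ 2 ≤ (m : ℝ)⁻¹ := by
    rw [div_le_iff₀ (by positivity), inv_mul_eq_div, le_div_iff₀ (by positivity)]
    nlinarith
  calc
    _ = -Real.log (m : ℝ)⁻¹ / 2 := by rw [Real.log_inv, neg_neg]
    _ ≤ -Real.log ((4 * m + 1) / (2 * m + 1) ^ 2) / 2 := by gcongr
    _ ≤ _ := by
      rw [← sum_spinProb_mul_inv_sq]
      exact neg_log_sum_mul_inv_sq_le_sum_mul_log (fun j _ => spinProb_nonneg m j) (sum_spinProb m)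
        fun j _ => by positivity

end Asymptotics

/-- With d_j := C(2m, m+j) − C(2m, m+j+1) and
E_m := (Σ_{j=0}^{m} d_j² · log(2j+1)) / catalan(2m), one has E_m / log m → 1/2. -/
theorem stmt_19 (E : ℕ → ℝ)
    (hE : ∀ m,
      E m = (∑ j ∈ Finset.range (m + 1),
          ((Nat.choose (2 * m) (m + j) - Nat.choose (2 * m) (m + j + 1) : ℕ) : ℝ) ^ 2 *
            Real.log (2 * (j : ℝ) + 1)) / (catalan (2 * m) : ℝ)) :
    Tendsto (fun m : ℕ => E m / Real.log m) atTop (nhds (1 / 2)) := by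
  have hmean (m : ℕ) :
      E m = ∑ j ∈ Finset.range (m + 1), spinProb m j * Real.log (2 * j + 1) := by
    simp only [hE, Finset.sum_div, spinProb, spinMultiplicity, div_mul_eq_mul_div]
  have hlog : Tendsto (fun m : ℕ => Real.log m) atTop atTop :=
    Real.tendsto_log_atTop.comp tendsto_natCast_atTop_atTop
  have hupper :
      Tendsto (fun m : ℕ => 1 / 2 + Real.log 5 / 2 / Real.log m) atTop (nhds (1 / 2)) := by
    simpa only [add_zero] using (hlog.const_div_atTop (Real.log 5 / 2)).const_add (1 / 2)
  refine tendsto_of_tendsto_of_tendsto_of_le_of_le' tendsto_const_nhds hupper ?_ ?_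
  · filter_upwards [eventually_ge_atTop 1, hlog.eventually_gt_atTop 0] with m hm hpos
    rw [hmean, le_div_iff₀ hpos]
    linarith [log_div_two_le_sum_spinProb_mul_log hm]
  · filter_upwards [eventually_ge_atTop 1, hlog.eventually_gt_atTop 0] with m hm hpos
    rw [hmean, div_le_iff₀ hpos, add_mul, div_mul_cancel₀ _ hpos.ne']
    linarith [sum_spinProb_mul_log_le hm]
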